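/- (The plus envelope is planar) Let Ω ⊆ ℂ be open, f = f₁ + i f₂ holomorphic on Ω with f′ ≠ 0 on Ω, R : Ω → ℝ smooth and positive, and X(τ) = (f₁, f₂, R). Let N = (X_u × X_v)/‖X_u × X_v‖, let Δ(X,R) and Δ₁R be defined from the first fundamental form of X as usual, and define the envelope ξ₊ = X − R(Δ(X,R) + √(1−Δ₁R)·N). Then ξ₊(τ) = (f₁(τ), f₂(τ), 0) for every τ ∈ Ω; that is, ξ₊ is contained in the plane {z = 0}. -/

import Mathlib

/-!
Since `R` is the height of `X`, one has `R_u = ⟨e, X_u⟩` and `R_v = ⟨e, X_v⟩` for the vertical unit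
vector `e`. Hence `Δ(X,R)` is the orthogonal projection of `e` onto the tangent plane of `X`, and
`1 - Δ₁R = ⟨e, N⟩²`. As `f` preserves orientation, `⟨e, N⟩ ≥ 0`, so `√(1 - Δ₁R) N` is the normal
component of `e`. Therefore `Δ(X,R) + √(1 - Δ₁R) N = e` and `ξ₊ = X - R e`.
-/

noncomputable section

open Complex

/-- Euclidean dot product on ℝ³ (as `Fin 3 → ℝ`). -/
def dot3 (a b : Fin 3 → ℝ) : ℝ := a 0 * b 0 + a 1 * b 1 + a 2 * b 2

/-- Euclidean norm on ℝ³. -/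
def norm3 (a : Fin 3 → ℝ) : ℝ := Real.sqrt (dot3 a a)

/-- Cross product on ℝ³. -/
def cross3 (a b : Fin 3 → ℝ) : Fin 3 → ℝ :=
  ![a 1 * b 2 - a 2 * b 1, a 2 * b 0 - a 0 * b 2, a 0 * b 1 - a 1 * b 0]

open Matrix

section RowProjection

variable {m n R : Type*} [Fintype m] [Fintype n]

/-- The orthogonal projection of `e` onto the span of the rows of `M`, where `A` is meant to be the
inverse of the Gram matrix `M * Mᵀ`. For `M` with rows `X_u`, `X_v` and `e` the vertical unit
vector, this is `Δ(X,R)`. -/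
def rowProjection [CommRing R] (A : Matrix m m R) (M : Matrix m n R) (e : n → R) : n → R :=
  (A *ᵥ (M *ᵥ e)) ᵥ* M

lemma mulVec_rowProjection [CommRing R] [DecidableEq m] {A : Matrix m m R} {M : Matrix m n R}
    (hA : A * (M * Mᵀ) = 1) (e : n → R) : M *ᵥ rowProjection A M e = M *ᵥ e := by
  rw [rowProjection, ← mulVec_transpose, mulVec_mulVec, mulVec_mulVec, mul_eq_one_comm.mp hA,
    one_mulVec]

lemma rowProjection_dotProduct [CommRing R] (A : Matrix m m R) (M : Matrix m n R) (e x : n → R) :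
    rowProjection A M e ⬝ᵥ x = A *ᵥ (M *ᵥ e) ⬝ᵥ M *ᵥ x :=
  (dotProduct_mulVec _ _ _).symm

lemma isSymm_of_mul_mul_transpose_eq_one [CommRing R] [DecidableEq m] {A : Matrix m m R}
    {M : Matrix m n R} (hA : A * (M * Mᵀ) = 1) : A.IsSymm := by
  have gram_isSymm : (M * Mᵀ).IsSymm := by
    rw [IsSymm, transpose_mul, transpose_transpose]
  rw [← inv_eq_left_inv hA]
  exact gram_isSymm.inv

section TwoRows

variable [CommRing R] (a b : n → R)

lemma pair_mul_transpose :
    (of ![a, b] * (of ![a, b])ᵀ : Matrix (Fin 2) (Fin 2) R) =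
      !![a ⬝ᵥ a, a ⬝ᵥ b; a ⬝ᵥ b, b ⬝ᵥ b] := by
  rw [dotProduct_comm a b]
  ext i j
  fin_cases i <;> fin_cases j <;> first | rfl | exact dotProduct_comm _ _

lemma pair_mulVec (e : n → R) : of ![a, b] *ᵥ e = ![a ⬝ᵥ e, b ⬝ᵥ e] := by
  simp only [cons_mulVec, empty_mulVec]

lemma rowProjection_pair (A : Matrix (Fin 2) (Fin 2) R) (e : n → R) :
    rowProjection A (of ![a, b]) e =
      (a ⬝ᵥ e * A 0 0 + b ⬝ᵥ e * A 0 1) • a + (a ⬝ᵥ e * A 1 0 + b ⬝ᵥ e * A 1 1) • b := by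
  rw [rowProjection, pair_mulVec]
  ext i
  simp [vecMul, mul_comm]

lemma rowProjection_pair_dotProduct {A : Matrix (Fin 2) (Fin 2) R} (hA : A.IsSymm) (e : n → R) :
    rowProjection A (of ![a, b]) e ⬝ᵥ e =
      (a ⬝ᵥ e) ^ 2 * A 0 0 + 2 * (a ⬝ᵥ e) * (b ⬝ᵥ e) * A 0 1 + (b ⬝ᵥ e) ^ 2 * A 1 1 := by
  rw [rowProjection_pair, add_dotProduct, smul_dotProduct, smul_dotProduct, smul_eq_mul,
    smul_eq_mul, hA.apply 0 1]
  ring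

end TwoRows

end RowProjection

section CrossProduct

lemma cross_dotProduct_self_smul_of_dotProduct_eq_zero {R : Type*} [CommRing R]
    {a b d : Fin 3 → R} (ha : a ⬝ᵥ d = 0) (hb : b ⬝ᵥ d = 0) :
    (a ⨯₃ b ⬝ᵥ a ⨯₃ b) • d = (a ⨯₃ b ⬝ᵥ d) • a ⨯₃ b := by
  have parallel : a ⨯₃ b ⨯₃ d = 0 := by
    rw [cross_cross_eq_smul_sub_smul, ha, hb, zero_smul, zero_smul, sub_zero]
  have expansion := cross_cross_eq_smul_sub_smul' (a ⨯₃ b) (a ⨯₃ b) d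
  rw [parallel, map_zero] at expansion
  exact (sub_eq_zero.mp expansion.symm).symm

lemma mulVec_cross_rows {R : Type*} [CommRing R] (M : Matrix (Fin 2) (Fin 3) R) :
    M *ᵥ M 0 ⨯₃ M 1 = 0 := by
  ext i
  fin_cases i
  · exact dot_self_cross _ _
  · exact dot_cross_self _ _

lemma det_mul_transpose_eq_cross_dotProduct_self {R : Type*} [CommRing R]
    (M : Matrix (Fin 2) (Fin 3) R) :
    (M * Mᵀ).det = M 0 ⨯₃ M 1 ⬝ᵥ M 0 ⨯₃ M 1 := by
  rw [det_fin_two, cross_dot_cross]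
  rfl

variable {K : Type*} [Field K] {A : Matrix (Fin 2) (Fin 2) K} {M : Matrix (Fin 2) (Fin 3) K}

lemma cross_rows_dotProduct_self_ne_zero (hA : A * (M * Mᵀ) = 1) :
    M 0 ⨯₃ M 1 ⬝ᵥ M 0 ⨯₃ M 1 ≠ 0 := by
  rw [← det_mul_transpose_eq_cross_dotProduct_self]
  exact det_ne_zero_of_left_inverse hA

lemma rowProjection_add_smul_cross (hA : A * (M * Mᵀ) = 1) (e : Fin 3 → K) :
    rowProjection A M e +
      (M 0 ⨯₃ M 1 ⬝ᵥ e / (M 0 ⨯₃ M 1 ⬝ᵥ M 0 ⨯₃ M 1)) • M 0 ⨯₃ M 1 = e := by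
  have orthogonal (i : Fin 2) : M i ⬝ᵥ (e - rowProjection A M e) = 0 := by
    rw [dotProduct_sub, sub_eq_zero]
    exact (congrFun (mulVec_rowProjection hA e) i).symm
  have normal_part : M 0 ⨯₃ M 1 ⬝ᵥ (e - rowProjection A M e) = M 0 ⨯₃ M 1 ⬝ᵥ e := by
    rw [dotProduct_sub, dotProduct_comm _ (rowProjection A M e), rowProjection_dotProduct,
      mulVec_cross_rows, dotProduct_zero, sub_zero]
  have parallel :=
    cross_dotProduct_self_smul_of_dotProduct_eq_zero (orthogonal 0) (orthogonal 1)
  rw [normal_part] at parallel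
  rw [div_eq_inv_mul, mul_smul, ← parallel,
    inv_smul_smul₀ (cross_rows_dotProduct_self_ne_zero hA), add_sub_cancel]

lemma dotProduct_self_sub_rowProjection_dotProduct (hA : A * (M * Mᵀ) = 1) (e : Fin 3 → K) :
    e ⬝ᵥ e - rowProjection A M e ⬝ᵥ e =
      (M 0 ⨯₃ M 1 ⬝ᵥ e) ^ 2 / (M 0 ⨯₃ M 1 ⬝ᵥ M 0 ⨯₃ M 1) := by
  have decomposition := congrArg (· ⬝ᵥ e) (rowProjection_add_smul_cross hA e)
  simp only [add_dotProduct, smul_dotProduct, smul_eq_mul] at decomposition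
  linear_combination -decomposition

end CrossProduct

lemma rowProjection_add_sqrt_smul_unit_normal {A : Matrix (Fin 2) (Fin 2) ℝ}
    {M : Matrix (Fin 2) (Fin 3) ℝ} (hA : A * (M * Mᵀ) = 1) {e : Fin 3 → ℝ} (he : e ⬝ᵥ e = 1)
    (hne : 0 ≤ M 0 ⨯₃ M 1 ⬝ᵥ e) :
    rowProjection A M e + √(1 - rowProjection A M e ⬝ᵥ e) •
      (√(M 0 ⨯₃ M 1 ⬝ᵥ M 0 ⨯₃ M 1))⁻¹ • M 0 ⨯₃ M 1 = e := by
  have normal_sq_nonneg : 0 ≤ M 0 ⨯₃ M 1 ⬝ᵥ M 0 ⨯₃ M 1 := by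
    simpa only [star_trivial] using dotProduct_self_star_nonneg (M 0 ⨯₃ M 1)
  rw [← he, dotProduct_self_sub_rowProjection_dotProduct hA, Real.sqrt_div' _ normal_sq_nonneg,
    Real.sqrt_sq hne, smul_smul, ← div_eq_mul_inv, div_div, Real.mul_self_sqrt normal_sq_nonneg,
    rowProjection_add_smul_cross hA]

lemma dot3_eq_dotProduct (a b : Fin 3 → ℝ) : dot3 a b = a ⬝ᵥ b :=
  (vec3_dotProduct a b).symm

lemma cross3_eq_crossProduct (a b : Fin 3 → ℝ) : cross3 a b = a ⨯₃ b :=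
  rfl

lemma height_gradient_add_sqrt_smul_unit_normal {a b : Fin 3 → ℝ} {A : Matrix (Fin 2) (Fin 2) ℝ}
    (hA : A * !![dot3 a a, dot3 a b; dot3 a b, dot3 b b] = 1) (hab : 0 ≤ cross3 a b 2) :
    (a 2 * A 0 0 + b 2 * A 0 1) • a + (a 2 * A 1 0 + b 2 * A 1 1) • b +
      √(1 - (a 2 ^ 2 * A 0 0 + 2 * a 2 * b 2 * A 0 1 + b 2 ^ 2 * A 1 1)) •
        (norm3 (cross3 a b))⁻¹ • cross3 a b = Pi.single 2 1 := by
  simp only [dot3_eq_dotProduct, ← pair_mul_transpose] at hA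
  have unit : (Pi.single 2 1 : Fin 3 → ℝ) ⬝ᵥ Pi.single 2 1 = 1 := by
    rw [dotProduct_single_one, Pi.single_eq_same]
  have upward : 0 ≤ a ⨯₃ b ⬝ᵥ Pi.single 2 1 := by
    rwa [dotProduct_single_one, ← cross3_eq_crossProduct]
  have decomposition := rowProjection_add_sqrt_smul_unit_normal hA unit upward
  rw [rowProjection_pair_dotProduct _ _ (isSymm_of_mul_mul_transpose_eq_one hA),
    rowProjection_pair] at decomposition
  simp only [dotProduct_single_one] at decomposition
  rw [norm3, dot3_eq_dotProduct, cross3_eq_crossProduct]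
  exact decomposition

lemma fderiv_vecCons_re_im_apply {E : Type*} [NormedAddCommGroup E] [NormedSpace ℝ E] {f : E → ℂ}
    {R : E → ℝ} {τ : E} (hf : DifferentiableAt ℝ f τ) (hR : DifferentiableAt ℝ R τ) (w : E) :
    fderiv ℝ (fun σ ↦ ![(f σ).re, (f σ).im, R σ]) τ w =
      ![(fderiv ℝ f τ w).re, (fderiv ℝ f τ w).im, fderiv ℝ R τ w] := by
  have derivative : HasFDerivAt (fun σ ↦ ![(f σ).re, (f σ).im, R σ])
      (ContinuousLinearMap.pi
        ![reCLM ∘L fderiv ℝ f τ, imCLM ∘L fderiv ℝ f τ, fderiv ℝ R τ]) τ := by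
    rw [hasFDerivAt_pi']
    intro i
    fin_cases i
    · exact reCLM.hasFDerivAt.comp τ hf.hasFDerivAt
    · exact imCLM.hasFDerivAt.comp τ hf.hasFDerivAt
    · exact hR.hasFDerivAt
  rw [derivative.fderiv]
  ext i
  fin_cases i <;> rfl

lemma det_eq_re_mul_im_sub_im_mul_re (L : ℂ →L[ℝ] ℂ) :
    L.det = (L 1).re * (L I).im - (L 1).im * (L I).re := by
  rw [ContinuousLinearMap.det, ← LinearMap.det_toMatrix basisOneI, det_fin_two]
  simp [LinearMap.toMatrix_apply, mul_comm]

lemma det_restrictScalars_eq_normSq (L : ℂ →L[ℂ] ℂ) :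
    (L.restrictScalars ℝ).det = normSq (L 1) := by
  have apply_I : L I = I * L 1 := by simpa using L.map_smul I 1
  simp [det_eq_re_mul_im_sub_im_mul_re, apply_I, normSq_apply]

lemma det_fderiv_nonneg_of_differentiableAt_complex {f : ℂ → ℂ} {τ : ℂ}
    (hf : DifferentiableAt ℂ f τ) : 0 ≤ (fderiv ℝ f τ).det := by
  rw [hf.fderiv_restrictScalars ℝ, det_restrictScalars_eq_normSq]
  exact normSq_nonneg _

theorem statement9_general {f : ℂ → ℂ} {R : ℂ → ℝ} {τ : ℂ}
    (hf : DifferentiableAt ℝ f τ) (hdet : 0 ≤ (fderiv ℝ f τ).det) (hR : DifferentiableAt ℝ R τ)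
    {X : ℂ → Fin 3 → ℝ} (hX : ∀ σ, X σ = ![(f σ).re, (f σ).im, R σ])
    {A : Matrix (Fin 2) (Fin 2) ℝ}
    (hA : A * !![dot3 (fderiv ℝ X τ 1) (fderiv ℝ X τ 1), dot3 (fderiv ℝ X τ 1) (fderiv ℝ X τ I);
        dot3 (fderiv ℝ X τ 1) (fderiv ℝ X τ I), dot3 (fderiv ℝ X τ I) (fderiv ℝ X τ I)] = 1) :
    let Xu := fderiv ℝ X τ 1
    let Xv := fderiv ℝ X τ I
    let N := (norm3 (cross3 Xu Xv))⁻¹ • cross3 Xu Xv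
    let Ru := fderiv ℝ R τ 1
    let Rv := fderiv ℝ R τ I
    let ΔXR := (Ru * A 0 0 + Rv * A 0 1) • Xu + (Ru * A 1 0 + Rv * A 1 1) • Xv
    let Δ₁R := Ru ^ 2 * A 0 0 + 2 * Ru * Rv * A 0 1 + Rv ^ 2 * A 1 1
    X τ - R τ • (ΔXR + √(1 - Δ₁R) • N) = ![(f τ).re, (f τ).im, 0] := by
  intro Xu Xv N Ru Rv ΔXR Δ₁R
  have tangent (w : ℂ) : fderiv ℝ X τ w =
      ![(fderiv ℝ f τ w).re, (fderiv ℝ f τ w).im, fderiv ℝ R τ w] := by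
    rw [funext hX, fderiv_vecCons_re_im_apply hf hR]
  have upward : 0 ≤ cross3 Xu Xv 2 := by
    simpa [cross3, Xu, Xv, tangent, det_eq_re_mul_im_sub_im_mul_re] using hdet
  have height_u : Ru = Xu 2 := (congrFun (tangent 1) 2).symm
  have height_v : Rv = Xv 2 := (congrFun (tangent I) 2).symm
  have vertical : ΔXR + √(1 - Δ₁R) • N = Pi.single 2 1 := by
    simpa only [ΔXR, Δ₁R, N, height_u, height_v] using
      height_gradient_add_sqrt_smul_unit_normal hA upward
  rw [vertical, hX]
  ext i
  fin_cases i <;> simp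

/-- (The plus envelope is planar) For the congruence of spheres with surface of centers
`X = (f₁, f₂, R)` (`f` holomorphic, `f′ ≠ 0`, `R > 0` smooth), the envelope
`ξ₊ = X − R(Δ(X,R) + √(1−Δ₁R)·N)` is `(f₁, f₂, 0)`, contained in the plane `{z = 0}`. -/
theorem statement9 (Ω : Set ℂ) (hΩ : IsOpen Ω) (f : ℂ → ℂ) (R : ℂ → ℝ)
    (hf : DifferentiableOn ℂ f Ω) (hf' : ∀ τ ∈ Ω, deriv f τ ≠ 0)
    (hR : ContDiffOn ℝ (⊤ : ℕ∞) R Ω) (hRpos : ∀ τ ∈ Ω, 0 < R τ)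
    (X : ℂ → Fin 3 → ℝ) (hX : ∀ σ, X σ = ![(f σ).re, (f σ).im, R σ])
    (A : ℂ → Matrix (Fin 2) (Fin 2) ℝ)
    (hA : ∀ τ ∈ Ω,
      A τ * !![dot3 (fderiv ℝ X τ 1) (fderiv ℝ X τ 1),
               dot3 (fderiv ℝ X τ 1) (fderiv ℝ X τ Complex.I);
               dot3 (fderiv ℝ X τ 1) (fderiv ℝ X τ Complex.I),
               dot3 (fderiv ℝ X τ Complex.I) (fderiv ℝ X τ Complex.I)] = 1) :
    ∀ τ ∈ Ω,
      let Xu := fderiv ℝ X τ 1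
      let Xv := fderiv ℝ X τ Complex.I
      let N := (norm3 (cross3 Xu Xv))⁻¹ • cross3 Xu Xv
      let Ru := fderiv ℝ R τ 1
      let Rv := fderiv ℝ R τ Complex.I
      let ΔXR := (Ru * A τ 0 0 + Rv * A τ 0 1) • Xu + (Ru * A τ 1 0 + Rv * A τ 1 1) • Xv
      let Δ₁R := Ru ^ 2 * A τ 0 0 + 2 * Ru * Rv * A τ 0 1 + Rv ^ 2 * A τ 1 1
      X τ - R τ • (ΔXR + Real.sqrt (1 - Δ₁R) • N) = ![(f τ).re, (f τ).im, 0] := by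
  intro τ hτ
  have hfτ : DifferentiableAt ℂ f τ := hf.differentiableAt (hΩ.mem_nhds hτ)
  exact statement9_general (hfτ.restrictScalars ℝ)
    (det_fderiv_nonneg_of_differentiableAt_complex hfτ)
    ((hR.contDiffAt (hΩ.mem_nhds hτ)).differentiableAt (by simp)) hX (hA τ hτ)
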